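/- Let T ≥ 1 be an integer, m ≥ 1 an integer, and let L > 0, G ≥ 0, σ ≥ 0, S_w ≥ 0 be reals, p ∈ (0,1], γ ∈ [0,1) with γ' = 1 − γ, and ρ_min ∈ (0,1]. Set η = ρ_min/√(4LT), η̄ = 1/√(4LT) and ζ = T^{-3/8}. Let F : {0,1,…,T} → ℝ and b, a : {1,…,T} → ℝ with b_t ≥ 0 and a_t ≥ 0, and let F* ∈ ℝ satisfy F* ≤ F_t for all t. Suppose that for every 1 ≤ t ≤ T: (i) F_t ≤ F_{t-1} − (ηγ'/2)·b_t + σ²/(8mT) + (ηL²/(2m))·a_t + (Lζ²/(2m²))·S_w, and (ii) a_t ≤ 12mG²η̄²/(pζ)² + 2ζS_w/p. Then (1/T)·Σ_{t=1}^{T} b_t ≤ 8√L·(F_0 − F*)/(γ'·ρ_min·√T) + 3G²L/(T^{1/4}·p²·γ') + √(L/(4T))·σ²/(m·γ'·ρ_min) + (S_w/(m·γ'))·( 2L²/(p·T^{3/8}) + 4L^{3/2}/(m·T^{1/4}·ρ_min) ). -/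

import Mathlib

/-- Deterministic core of Theorem 1: convergence of asynchronous decentralized SGD. -/
theorem async_dsgd_convergence
    (T m : ℕ) (hT : 1 ≤ T) (hm : 1 ≤ m)
    (L G σ Sw p γ ρmin γ' η ηbar ζ : ℝ)
    (hL : 0 < L) (hG : 0 ≤ G) (hσ : 0 ≤ σ) (hSw : 0 ≤ Sw)
    (hp0 : 0 < p) (hp1 : p ≤ 1)
    (hγ0 : 0 ≤ γ) (hγ1 : γ < 1) (hγ' : γ' = 1 - γ)
    (hρ0 : 0 < ρmin) (hρ1 : ρmin ≤ 1)
    (hη : η = ρmin / Real.sqrt (4 * L * T))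
    (hηbar : ηbar = 1 / Real.sqrt (4 * L * T))
    (hζ : ζ = (T : ℝ) ^ (-(3 / 8 : ℝ)))
    (F b a : ℕ → ℝ) (Fstar : ℝ)
    (hb : ∀ t, 1 ≤ t → t ≤ T → 0 ≤ b t)
    (ha : ∀ t, 1 ≤ t → t ≤ T → 0 ≤ a t)
    (hFstar : ∀ t, t ≤ T → Fstar ≤ F t)
    (hdesc : ∀ t, 1 ≤ t → t ≤ T →
      F t ≤ F (t - 1) - η * γ' / 2 * b t + σ ^ 2 / (8 * m * T)
        + η * L ^ 2 / (2 * m) * a t + L * ζ ^ 2 / (2 * m ^ 2) * Sw)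
    (hcons : ∀ t, 1 ≤ t → t ≤ T →
      a t ≤ 12 * m * G ^ 2 * ηbar ^ 2 / (p * ζ) ^ 2 + 2 * ζ * Sw / p) :
    (1 / T : ℝ) * ∑ t ∈ Finset.Icc 1 T, b t ≤
      8 * Real.sqrt L * (F 0 - Fstar) / (γ' * ρmin * Real.sqrt T)
      + 3 * G ^ 2 * L / ((T : ℝ) ^ ((1 : ℝ) / 4) * p ^ 2 * γ')
      + Real.sqrt (L / (4 * T)) * σ ^ 2 / (m * γ' * ρmin)
      + Sw / (m * γ') *
          (2 * L ^ 2 / (p * (T : ℝ) ^ ((3 : ℝ) / 8))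
            + 4 * L * Real.sqrt L / (m * (T : ℝ) ^ ((1 : ℝ) / 4) * ρmin)) := by
  have hTR : (1 : ℝ) ≤ (T : ℝ) := by exact_mod_cast hT
  have hT0 : (0 : ℝ) < (T : ℝ) := by linarith
  have hmR : (0 : ℝ) < (m : ℝ) := by exact_mod_cast hm
  have hg : 0 < γ' := by linarith
  obtain ⟨x, hx⟩ : ∃ x : ℝ, x = (T : ℝ) ^ ((1 : ℝ) / 8) := ⟨_, rfl⟩
  have hx0 : 0 < x := by rw [hx]; positivity
  have hxT : (T : ℝ) = x ^ 8 := by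
    rw [hx, ← Real.rpow_natCast, ← Real.rpow_mul hT0.le]; norm_num
  have h14 : (T : ℝ) ^ ((1 : ℝ) / 4) = x ^ 2 := by
    rw [hx, ← Real.rpow_natCast, ← Real.rpow_mul hT0.le]; norm_num
  have h38 : (T : ℝ) ^ ((3 : ℝ) / 8) = x ^ 3 := by
    rw [hx, ← Real.rpow_natCast, ← Real.rpow_mul hT0.le]; norm_num
  have hz : ζ = 1 / x ^ 3 := by
    rw [hζ, Real.rpow_neg hT0.le, h38, one_div]
  obtain ⟨s, hs⟩ : ∃ s : ℝ, s = Real.sqrt L := ⟨_, rfl⟩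
  have hs0 : 0 < s := by rw [hs]; positivity
  have hsL : L = s ^ 2 := by rw [hs, Real.sq_sqrt hL.le]
  have hsT : Real.sqrt T = x ^ 4 := by
    rw [hxT, show x ^ 8 = (x ^ 4) ^ 2 by ring]; exact Real.sqrt_sq (by positivity)
  have hsq : Real.sqrt (4 * L * T) = 2 * s * x ^ 4 := by
    rw [hxT, hsL, show 4 * s ^ 2 * x ^ 8 = (2 * s * x ^ 4) ^ 2 by ring]
    exact Real.sqrt_sq (by positivity)
  have hsq2 : Real.sqrt (L / (4 * T)) = s / (2 * x ^ 4) := by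
    rw [hxT, hsL, show s ^ 2 / (4 * x ^ 8) = (s / (2 * x ^ 4)) ^ 2 by field_simp; norm_num]
    exact Real.sqrt_sq (by positivity)
  have hη0 : 0 < η := by rw [hη, hsq]; positivity
  obtain ⟨C, hC⟩ : ∃ C : ℝ, C = σ ^ 2 / (8 * m * T)
      + η * L ^ 2 / (2 * m) * (12 * m * G ^ 2 * ηbar ^ 2 / (p * ζ) ^ 2 + 2 * ζ * Sw / p)
      + L * ζ ^ 2 / (2 * m ^ 2) * Sw := ⟨_, rfl⟩
  have key : ∀ n : ℕ, n ≤ T →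
      η * γ' / 2 * ∑ t ∈ Finset.Icc 1 n, b t ≤ F 0 - F n + n * C := by
    intro n
    induction n with
    | zero => intro _; simp
    | succ k ih =>
      intro hk
      have h1 := ih (by omega)
      have h2 := hdesc (k + 1) (by omega) hk
      have h3 := mul_le_mul_of_nonneg_left (hcons (k + 1) (by omega) hk)
        (show 0 ≤ η * L ^ 2 / (2 * m) by positivity)
      rw [Finset.sum_Icc_succ_top (by omega), mul_add]
      rw [Nat.add_sub_cancel] at h2
      push_cast
      linarith
  have hD : 0 ≤ F 0 - Fstar := by linarith [hFstar 0 (by omega)]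
  have hfin := key T le_rfl
  have hFT := hFstar T le_rfl
  generalize (∑ t ∈ Finset.Icc 1 T, b t) = B at hfin ⊢
  have hle : (1 / T : ℝ) * B ≤ 2 / (η * γ' * T) * (F 0 - Fstar + T * C) := by
    have h4 : η * γ' / 2 * B ≤ F 0 - Fstar + T * C := by linarith
    have h5 := mul_le_mul_of_nonneg_left h4 (show 0 ≤ 2 / (η * γ' * T) by positivity)
    refine le_trans (le_of_eq ?_) h5
    field_simp
  refine hle.trans ?_
  rw [h14, h38, hsq2, hsT, ← hs]
  generalize F 0 - Fstar = D at hD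
  have e : 2 / (η * γ' * T) * (D + T * C) =
      8 * s * D / (γ' * ρmin * x ^ 4)
      + 3 * G ^ 2 * L / (x ^ 2 * p ^ 2 * γ')
      + s / (2 * x ^ 4) * σ ^ 2 / (m * γ' * ρmin)
      + Sw / (m * γ') * (2 * L ^ 2 / (p * x ^ 3) + 4 * L * s / (m * x ^ 2 * ρmin))
      - (4 * s * D / (γ' * ρmin * x ^ 4)
        + Sw / (m * γ') * (2 * L * s / (m * x ^ 2 * ρmin))) := by
    rw [hC, hη, hηbar, hsq, hz, hxT, hsL]
    field_simp
    ring
  rw [e]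
  have h6 : 0 ≤ 4 * s * D / (γ' * ρmin * x ^ 4)
        + Sw / (m * γ') * (2 * L * s / (m * x ^ 2 * ρmin)) := by positivity
  linarith
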